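/- Every nonsingular n×n joint probability matrix all of whose entries are strictly positive is a good matrix. -/

import Mathlib

open scoped BigOperators Classical

noncomputable section

/-- Probability of an event `E` under a distribution `μ` on a finite sample space `Ω`. -/
def pr {Ω : Type} [Fintype Ω] (μ : Ω → ℝ) (E : Ω → Prop) : ℝ :=
  ∑ ω, if E ω then μ ω else 0

/-- `μ` is a probability distribution on the finite space `Ω`. -/
def IsProb {Ω : Type} [Fintype Ω] (μ : Ω → ℝ) : Prop :=
  (∀ ω, 0 ≤ μ ω) ∧ ∑ ω, μ ω = 1

/-- Shannon entropy (base 2) of a random variable `α` on a finite probability space. -/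
def ent {Ω A : Type} [Fintype Ω] (μ : Ω → ℝ) (α : Ω → A) : ℝ :=
  -∑ a ∈ Finset.univ.image α,
      pr μ (fun ω => α ω = a) * Real.logb 2 (pr μ (fun ω => α ω = a))

/-- Conditional entropy `H(α | β)`. -/
def condEnt {Ω A B : Type} [Fintype Ω] (μ : Ω → ℝ) (α : Ω → A) (β : Ω → B) : ℝ :=
  ent μ (fun ω => (α ω, β ω)) - ent μ β

/-- Mutual information `I(α : β)`. -/
def mutualInfo {Ω A B : Type} [Fintype Ω] (μ : Ω → ℝ) (α : Ω → A) (β : Ω → B) : ℝ :=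
  ent μ α + ent μ β - ent μ (fun ω => (α ω, β ω))

/-- Conditional mutual information `I(α : β | γ)`. -/
def condMutualInfo {Ω A B C : Type} [Fintype Ω] (μ : Ω → ℝ)
    (α : Ω → A) (β : Ω → B) (γ : Ω → C) : ℝ :=
  condEnt μ α γ + condEnt μ β γ - condEnt μ (fun ω => (α ω, β ω)) γ

/-- Independence of two random variables. -/
def Indep {Ω A B : Type} [Fintype Ω] (μ : Ω → ℝ) (α : Ω → A) (β : Ω → B) : Prop :=
  ∀ (a : A) (b : B),
    pr μ (fun ω => α ω = a ∧ β ω = b) =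
      pr μ (fun ω => α ω = a) * pr μ (fun ω => β ω = b)

/-- Auxiliary form of "conditionally independent of order `k`" (explicit `Fintype`):
`α` and `β` are conditionally independent of order `0` if they are independent,
and of order `k + 1` if on some finite probability space there are random variables
`α₀, β₀, α*, β*` such that `(α₀, β₀)` has the same joint distribution as `(α, β)`,
`I(α₀ : β₀ | α*) = 0`, `I(α₀ : β₀ | β*) = 0`, and `α*, β*` are conditionally
independent of order `k`. -/
def CondIndepOrderAux : ℕ → (Ω A B : Type) → Fintype Ω → (Ω → ℝ) → (Ω → A) → (Ω → B) → Prop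
  | 0, _Ω, _A, _B, iΩ, μ, α, β => @Indep _ _ _ iΩ μ α β
  | k+1, _Ω, A, B, iΩ, μ, α, β =>
      ∃ (Ω' A' B' : Type) (iΩ' : Fintype Ω') (μ' : Ω' → ℝ)
        (α₀ : Ω' → A) (β₀ : Ω' → B) (αs : Ω' → A') (βs : Ω' → B'),
        @IsProb _ iΩ' μ' ∧
        (∀ (a : A) (b : B),
          @pr _ iΩ' μ' (fun ω => α₀ ω = a ∧ β₀ ω = b) =
            @pr _ iΩ μ (fun ω => α ω = a ∧ β ω = b)) ∧
        @condMutualInfo _ _ _ _ iΩ' μ' α₀ β₀ αs = 0 ∧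
        @condMutualInfo _ _ _ _ iΩ' μ' α₀ β₀ βs = 0 ∧
        CondIndepOrderAux k Ω' A' B' iΩ' μ' αs βs

/-- Random variables `α` and `β` on a finite probability space are
conditionally independent of order `k`. -/
def CondIndepOrder {Ω A B : Type} [iΩ : Fintype Ω]
    (μ : Ω → ℝ) (α : Ω → A) (β : Ω → B) (k : ℕ) : Prop :=
  CondIndepOrderAux k Ω A B iΩ μ α β

/-- An `m × n` joint probability matrix: nonnegative entries summing to `1`. -/
def IsJointProbMatrix {m n : ℕ} (M : Matrix (Fin m) (Fin n) ℝ) : Prop :=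
  (∀ i j, 0 ≤ M i j) ∧ ∑ i, ∑ j, M i j = 1

/-- `M` is the joint probability matrix of the pair `(α, β)`. -/
def IsJointMatrixOf {Ω : Type} [Fintype Ω] {m n : ℕ} (M : Matrix (Fin m) (Fin n) ℝ)
    (μ : Ω → ℝ) (α : Ω → Fin m) (β : Ω → Fin n) : Prop :=
  ∀ i j, M i j = pr μ (fun ω => α ω = i ∧ β ω = j)

/-- `M` is a block matrix: rows and columns can be partitioned into two nonempty
parts so that the two diagonal blocks each contain a nonzero element and all
entries outside the diagonal blocks vanish. -/
def IsBlockMatrix {m n : ℕ} (M : Matrix (Fin m) (Fin n) ℝ) : Prop :=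
  ∃ (I₁ : Finset (Fin m)) (J₁ : Finset (Fin n)),
    I₁.Nonempty ∧ I₁ᶜ.Nonempty ∧ J₁.Nonempty ∧ J₁ᶜ.Nonempty ∧
    (∃ i ∈ I₁, ∃ j ∈ J₁, M i j ≠ 0) ∧
    (∃ i ∈ I₁ᶜ, ∃ j ∈ J₁ᶜ, M i j ≠ 0) ∧
    (∀ i j, ((i ∈ I₁ ∧ j ∈ J₁ᶜ) ∨ (i ∈ I₁ᶜ ∧ j ∈ J₁)) → M i j = 0)

/-- `M` is a good matrix: the joint probability matrix of some pair of
conditionally independent random variables (of some finite order). -/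
def IsGoodMatrix {m n : ℕ} (M : Matrix (Fin m) (Fin n) ℝ) : Prop :=
  ∃ (Ω : Type) (iΩ : Fintype Ω) (μ : Ω → ℝ) (α : Ω → Fin m) (β : Ω → Fin n) (k : ℕ),
    @IsProb _ iΩ μ ∧ @IsJointMatrixOf _ iΩ _ _ M μ α β ∧
    @CondIndepOrder _ _ _ iΩ μ α β k

/-- A stochastic matrix: nonnegative entries, all row sums equal to `1`. -/
def IsStochastic {m n : ℕ} (A : Matrix (Fin m) (Fin n) ℝ) : Prop :=
  (∀ i j, 0 ≤ A i j) ∧ ∀ i, ∑ j, A i j = 1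

/-- The matrix `D_ε`: diagonal entries `1/2 - ε`, off-diagonal entries `ε`. -/
def Dmat (ε : ℝ) : Matrix (Fin 2) (Fin 2) ℝ :=
  fun i j => if i = j then 1/2 - ε else ε

/-- The distribution of `n` i.i.d. trials, each distributed according to `μ`. -/
def iidMeasure {Ω : Type} [Fintype Ω] (μ : Ω → ℝ) (n : ℕ) : (Fin n → Ω) → ℝ :=
  fun ωv => ∏ i, μ (ωv i)

/-- The sequence of `n` coordinatewise copies of a random variable. -/
def iidRV {Ω A : Type} (α : Ω → A) (n : ℕ) : (Fin n → Ω) → (Fin n → A) :=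
  fun ωv i => α (ωv i)

/-- `(u, v, w)` belongs to the rate region of the pair `(α, β)`. -/
def InRateRegion {Ω A B : Type} [Fintype Ω] (μ : Ω → ℝ) (α : Ω → A) (β : Ω → B)
    (u v w : ℝ) : Prop :=
  0 ≤ u ∧ 0 ≤ v ∧ 0 ≤ w ∧
  ∀ ε > (0:ℝ), ∀ δ > (0:ℝ), ∃ n₀ : ℕ, ∀ n ≥ n₀,
    ∃ (t : (Fin n → A) × (Fin n → B) → (Fin ⌊(u + δ) * n⌋₊ → Bool))
      (f : (Fin n → A) × (Fin n → B) → (Fin ⌊(v + δ) * n⌋₊ → Bool))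
      (g : (Fin n → A) × (Fin n → B) → (Fin ⌊(w + δ) * n⌋₊ → Bool))
      (r : (Fin ⌊(u + δ) * n⌋₊ → Bool) × (Fin ⌊(v + δ) * n⌋₊ → Bool) → (Fin n → A))
      (s : (Fin ⌊(u + δ) * n⌋₊ → Bool) × (Fin ⌊(w + δ) * n⌋₊ → Bool) → (Fin n → B)),
      pr (iidMeasure μ n) (fun ωv =>
          r (t (iidRV α n ωv, iidRV β n ωv), f (iidRV α n ωv, iidRV β n ωv)) = iidRV α n ωv)
        > 1 - ε ∧
      pr (iidMeasure μ n) (fun ωv =>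
          s (t (iidRV α n ωv, iidRV β n ωv), g (iidRV α n ωv, iidRV β n ωv)) = iidRV β n ωv)
        > 1 - ε

/-- The support of a matrix: the set of positions of its nonzero entries. -/
def msupport {m n : ℕ} (M : Matrix (Fin m) (Fin n) ℝ) : Set (Fin m × Fin n) :=
  {p | M p.1 p.2 ≠ 0}

/-- An r-matrix: nonnegative entries and rectangular support. -/
def IsRMatrix {m n : ℕ} (M : Matrix (Fin m) (Fin n) ℝ) : Prop :=
  (∀ i j, 0 ≤ M i j) ∧ ∃ (A : Set (Fin m)) (B : Set (Fin n)), msupport M = A ×ˢ B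

/-- An r-decomposition of `M`: an expression of `M` as a finite sum of r-matrices
such that the supports of consecutive summands intersect. -/
def IsRDecomposition {m n : ℕ} (M : Matrix (Fin m) (Fin n) ℝ)
    (l : ℕ) (Ms : Fin l → Matrix (Fin m) (Fin n) ℝ) : Prop :=
  M = ∑ i, Ms i ∧ (∀ i, IsRMatrix (Ms i)) ∧
  ∀ (i : ℕ) (h : i + 1 < l),
    (msupport (Ms ⟨i, Nat.lt_of_succ_lt h⟩) ∩ msupport (Ms ⟨i + 1, h⟩)).Nonempty

end

/-!
Fix a positive probability vector `q` and consider a pair `(ξ, η)` in which `η` is a copy of `ξ ∼ q`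
with probability `s` and an independent sample from `q` otherwise. For `s = 0` it is independent.
If `α` and `β` are obtained from `ξ` by keeping it with probability `√s` and resampling it
otherwise, independently of each other, then `(α, β)` is again such a pair, with copying probability
`s`. There is a coupling in which `(α, β)` is related in the same way to `ξ` and to `η`, while `η`
copies `ξ` only with probability `s - c`, as soon as `c ≤ s` and `c ≤ (1 - √s)² min q`. As the
second bound stays away from `0` for `s` bounded away from `1`, finitely many steps reach every
`s < 1`.

For a positive joint law `M` with marginals `r` and `t`, take `q = (M - (1 - s) r tᵀ) / s` on the
set of pairs, positive for `s` close to `1`. It has the marginals of `M`, so the first coordinate of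
`ξ` and the second coordinate of `η` have joint law `s q + (1 - s) r tᵀ = M`; and functions of `ξ`
and of `η` are independent given `ξ`, and given `η`.
-/

open scoped Topology

section Probability

variable {Ω A B C : Type} [Fintype Ω] {μ : Ω → ℝ}

lemma pr_pos_of_mem (hμ : ∀ ω, 0 ≤ μ ω) {E : Ω → Prop} {ω : Ω} (hE : E ω) (hω : 0 < μ ω) :
    0 < pr μ E := by
  refine Finset.sum_pos' (fun ω' _ => ?_) ⟨ω, Finset.mem_univ ω, by rwa [if_pos hE]⟩
  split_ifs
  exacts [hμ ω', le_rfl]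

lemma pr_congr {E E' : Ω → Prop} (h : ∀ ω, E ω ↔ E' ω) : pr μ E = pr μ E' := by
  rw [funext fun ω => propext (h ω)]

lemma sum_pr_and [Fintype A] (μ : Ω → ℝ) (α : Ω → A) (E : Ω → Prop) :
    ∑ a, pr μ (fun ω => α ω = a ∧ E ω) = pr μ E := by
  unfold pr
  rw [Finset.sum_comm]
  refine Finset.sum_congr rfl fun ω _ => ?_
  by_cases hE : E ω <;> simp [hE]

lemma pr_fst_eq [Fintype A] [Fintype B] (μ : A × B → ℝ) (a : A) :
    pr μ (fun p => p.1 = a) = ∑ b, μ (a, b) := by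
  simp [pr, Fintype.sum_prod_type_right]

lemma pr_snd_eq [Fintype A] [Fintype B] (μ : A × B → ℝ) (b : B) :
    pr μ (fun p => p.2 = b) = ∑ a, μ (a, b) := by
  simp [pr, Fintype.sum_prod_type]

lemma pr_fst_snd_eq [Fintype A] [Fintype B] (μ : A × B → ℝ) (a : A) (b : B) :
    pr μ (fun p => p.1 = a ∧ p.2 = b) = μ (a, b) := by
  simp [pr, ← Prod.ext_iff (y := (a, b))]

lemma Indep.of_pr_eq_mul [Fintype A] [Fintype B] {α : Ω → A} {β : Ω → B} {p : A → ℝ} {q : B → ℝ}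
    (hp : ∑ a, p a = 1) (hq : ∑ b, q b = 1)
    (h : ∀ a b, pr μ (fun ω => α ω = a ∧ β ω = b) = p a * q b) : Indep μ α β := by
  have hα (a : A) : pr μ (fun ω => α ω = a) = p a := by
    simp_rw [← sum_pr_and μ β (fun ω => α ω = a), and_comm, h, ← Finset.mul_sum, hq, mul_one]
  have hβ (b : B) : pr μ (fun ω => β ω = b) = q b := by
    simp_rw [← sum_pr_and μ α (fun ω => β ω = b), h, ← Finset.sum_mul, hp, one_mul]
  intro a b
  rw [h, hα, hβ]

lemma ent_eq_neg_sum_mul_logb (μ : Ω → ℝ) (α : Ω → A) :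
    ent μ α = -∑ ω, μ ω * Real.logb 2 (pr μ (fun ω' => α ω' = α ω)) := by
  refine congrArg Neg.neg (Finset.sum_image' _ fun ω _ => ?_)
  rw [pr, ← Finset.sum_filter, Finset.sum_mul]
  refine Finset.sum_congr rfl fun ω' hω' => ?_
  rw [(Finset.mem_filter.mp hω').2, pr, Finset.sum_filter]

lemma condMutualInfo_eq_zero_of_mul_eq_mul (hμ : ∀ ω, 0 ≤ μ ω) {α : Ω → A} {β : Ω → B}
    {γ : Ω → C}
    (h : ∀ a b c, pr μ (fun ω => α ω = a ∧ β ω = b ∧ γ ω = c) * pr μ (fun ω => γ ω = c) =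
      pr μ (fun ω => α ω = a ∧ γ ω = c) * pr μ (fun ω => β ω = b ∧ γ ω = c)) :
    condMutualInfo μ α β γ = 0 := by
  have pointwise (ω : Ω) :
      μ ω * Real.logb 2 (pr μ (fun ω' => α ω' = α ω ∧ β ω' = β ω ∧ γ ω' = γ ω)) +
        μ ω * Real.logb 2 (pr μ (fun ω' => γ ω' = γ ω)) =
      μ ω * Real.logb 2 (pr μ (fun ω' => α ω' = α ω ∧ γ ω' = γ ω)) +
        μ ω * Real.logb 2 (pr μ (fun ω' => β ω' = β ω ∧ γ ω' = γ ω)) := by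
    rcases (hμ ω).eq_or_lt with hω | hω
    · simp [← hω]
    have pr_ne_zero {E : Ω → Prop} (hE : E ω) : pr μ E ≠ 0 := (pr_pos_of_mem hμ hE hω).ne'
    have log_h := congrArg (Real.logb 2) (h (α ω) (β ω) (γ ω))
    rw [Real.logb_mul (pr_ne_zero (by simp)) (pr_ne_zero (by simp)),
      Real.logb_mul (pr_ne_zero (by simp)) (pr_ne_zero (by simp))] at log_h
    rw [← mul_add, ← mul_add, log_h]
  have total := Finset.sum_congr (rfl : (Finset.univ : Finset Ω) = _) fun ω _ => pointwise ω
  simp only [Finset.sum_add_distrib] at total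
  simp only [condMutualInfo, condEnt, ent_eq_neg_sum_mul_logb, Prod.mk.injEq, and_assoc]
  linarith

lemma condMutualInfo_eq_zero_of_pr_eq_mul [Finite A] [Finite B] (hμ : ∀ ω, 0 ≤ μ ω)
    {α : Ω → A} {β : Ω → B} {γ : Ω → C} {F : A → C → ℝ} {G : B → C → ℝ}
    (h : ∀ a b c, pr μ (fun ω => α ω = a ∧ β ω = b ∧ γ ω = c) = F a c * G b c) :
    condMutualInfo μ α β γ = 0 := by
  have := Fintype.ofFinite A
  have := Fintype.ofFinite B
  have hβγ (b : B) (c : C) : pr μ (fun ω => β ω = b ∧ γ ω = c) = (∑ a, F a c) * G b c := by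
    simp_rw [← sum_pr_and μ α (fun ω => β ω = b ∧ γ ω = c), h, Finset.sum_mul]
  have hαγ (a : A) (c : C) : pr μ (fun ω => α ω = a ∧ γ ω = c) = F a c * ∑ b, G b c := by
    simp_rw [← sum_pr_and μ β (fun ω => α ω = a ∧ γ ω = c), and_left_comm, h, Finset.mul_sum]
  have hγ (c : C) : pr μ (fun ω => γ ω = c) = (∑ a, F a c) * ∑ b, G b c := by
    simp_rw [← sum_pr_and μ β (fun ω => γ ω = c), hβγ, Finset.mul_sum]
  refine condMutualInfo_eq_zero_of_mul_eq_mul hμ fun a b c => ?_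
  rw [h, hγ, hαγ, hβγ]
  ring

lemma condMutualInfo_comm (μ : Ω → ℝ) (α : Ω → A) (β : Ω → B) (γ : Ω → C) :
    condMutualInfo μ α β γ = condMutualInfo μ β α γ := by
  simp only [condMutualInfo, condEnt, ent_eq_neg_sum_mul_logb, Prod.mk.injEq,
    and_comm (a := α _ = _)]
  ring

lemma condMutualInfo_comp_left_eq_zero (hμ : ∀ ω, 0 ≤ μ ω) (f : C → A) (β : Ω → B) (γ : Ω → C) :
    condMutualInfo μ (f ∘ γ) β γ = 0 := by
  refine condMutualInfo_eq_zero_of_mul_eq_mul hμ fun a b c => ?_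
  by_cases hc : f c = a
  · have absorb (ω : Ω) : f (γ ω) = a ∧ γ ω = c ↔ γ ω = c := by grind
    simp only [Function.comp_apply, and_left_comm (b := β _ = b), absorb, mul_comm]
  · have impossible (ω : Ω) : ¬(f (γ ω) = a ∧ γ ω = c) := by grind
    simp only [Function.comp_apply, and_left_comm (b := β _ = b), impossible, and_false]
    simp [pr]

lemma condMutualInfo_comp_right_eq_zero (hμ : ∀ ω, 0 ≤ μ ω) (α : Ω → A) (g : C → B) (γ : Ω → C) :
    condMutualInfo μ α (g ∘ γ) γ = 0 := by
  rw [condMutualInfo_comm, condMutualInfo_comp_left_eq_zero hμ]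

end Probability

section CondIndepOrder

variable {Ω A B : Type} [Fintype Ω] {μ : Ω → ℝ} {α : Ω → A} {β : Ω → B} {k : ℕ}

lemma CondIndepOrder.succ {A' B' : Type} {ξ : Ω → A'} {η : Ω → B'} (h : CondIndepOrder μ ξ η k)
    (hμ : IsProb μ) (hξ : condMutualInfo μ α β ξ = 0) (hη : condMutualInfo μ α β η = 0) :
    CondIndepOrder μ α β (k + 1) :=
  ⟨Ω, A', B', _, μ, α, β, ξ, η, hμ, fun _ _ => rfl, hξ, hη, h⟩

lemma CondIndepOrder.comp {A' B' : Type} (h : CondIndepOrder μ α β k) (hμ : IsProb μ)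
    (f : A → A') (g : B → B') : CondIndepOrder μ (f ∘ α) (g ∘ β) (k + 1) :=
  h.succ hμ (condMutualInfo_comp_left_eq_zero hμ.1 f _ α)
    (condMutualInfo_comp_right_eq_zero hμ.1 _ g β)

lemma CondIndepOrder.congr_law [Finite A] [Finite B] {Ω' : Type} [Fintype Ω'] {ν : Ω' → ℝ}
    {α' : Ω' → A} {β' : Ω' → B} (h : CondIndepOrder μ α β k)
    (law_eq : ∀ a b, pr ν (fun ω => α' ω = a ∧ β' ω = b) = pr μ (fun ω => α ω = a ∧ β ω = b)) :
    CondIndepOrder ν α' β' k := by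
  cases k with
  | zero =>
    have := Fintype.ofFinite A
    have := Fintype.ofFinite B
    have hα (a : A) : pr ν (fun ω => α' ω = a) = pr μ (fun ω => α ω = a) := by
      rw [← sum_pr_and ν β', ← sum_pr_and μ β]
      simp_rw [and_comm (b := _ = a), law_eq]
    have hβ (b : B) : pr ν (fun ω => β' ω = b) = pr μ (fun ω => β ω = b) := by
      rw [← sum_pr_and ν α', ← sum_pr_and μ α]
      simp_rw [law_eq]
    intro a b
    rw [law_eq, hα, hβ]
    exact h a b
  | succ k =>
    obtain ⟨Ω₀, A', B', _, μ₀, α₀, β₀, ξ, η, hμ₀, law, hξ, hη, hk⟩ := h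
    exact ⟨Ω₀, A', B', _, μ₀, α₀, β₀, ξ, η, hμ₀, fun a b => (law a b).trans (law_eq a b).symm,
      hξ, hη, hk⟩

end CondIndepOrder

local notation "δ" => (1 : Matrix _ _ ℝ)

section CopyLaw

variable {P : Type} {q : P → ℝ} {s : ℝ}

/-- The joint law of `(ξ, η)` where `ξ` has law `q` and `η` is a copy of `ξ` with probability `s`
and an independent sample from `q` with probability `1 - s`. These laws interpolate between an
independent pair (`s = 0`) and two equal variables (`s = 1`). -/
noncomputable def copyLaw (q : P → ℝ) (s : ℝ) : P × P → ℝ :=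
  fun (x, y) => s * (q x * δ x y) + (1 - s) * (q x * q y)

lemma copyLaw_apply (q : P → ℝ) (s : ℝ) (x y : P) :
    copyLaw q s (x, y) = s * (q x * δ x y) + (1 - s) * (q x * q y) :=
  rfl

lemma delta_apply (x y : P) : δ x y = if x = y then 1 else 0 :=
  Matrix.one_apply

lemma delta_nonneg (x y : P) : 0 ≤ δ x y := by
  rw [delta_apply]
  positivity

variable [Fintype P]

lemma isProb_copyLaw (hq : IsProb q) (hs₀ : 0 ≤ s) (hs₁ : s ≤ 1) : IsProb (copyLaw q s) := by
  constructor
  · rintro ⟨x, y⟩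
    exact add_nonneg (mul_nonneg hs₀ (mul_nonneg (hq.1 x) (delta_nonneg x y)))
      (mul_nonneg (sub_nonneg.2 hs₁) (mul_nonneg (hq.1 x) (hq.1 y)))
  · simp [copyLaw_apply, Fintype.sum_prod_type, Finset.sum_add_distrib, ← Finset.mul_sum, hq.2,
      delta_apply]

lemma indep_copyLaw_zero (hq : ∑ x, q x = 1) : Indep (copyLaw q 0) Prod.fst Prod.snd :=
  .of_pr_eq_mul hq hq fun a b => by simp [pr_fst_snd_eq, copyLaw_apply]

lemma pr_copyLaw_fst_fst_snd_snd {A B : Type} [Fintype A] [Fintype B] (q : A × B → ℝ)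
    (s : ℝ) (a : A) (b : B) :
    pr (copyLaw q s) (fun p => p.1.1 = a ∧ p.2.2 = b) =
      s * q (a, b) + (1 - s) * ((∑ b', q (a, b')) * ∑ a', q (a', b)) := by
  have marginal : pr (copyLaw q s) (fun p => p.1.1 = a ∧ p.2.2 = b) =
      ∑ b', ∑ a', copyLaw q s ((a, b'), (a', b)) := by
    rw [← sum_pr_and _ (fun p => p.1.2)]
    refine Finset.sum_congr rfl fun b' _ => ?_
    rw [← sum_pr_and _ (fun p => p.2.1)]
    refine Finset.sum_congr rfl fun a' _ => ?_
    rw [← pr_fst_snd_eq (copyLaw q s)]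
    exact pr_congr fun ω => by simp only [Prod.ext_iff]; tauto
  have copyLaw_mk (a' : A) (b' : B) : copyLaw q s ((a, b'), (a', b)) =
      s * (if a = a' then if b' = b then q (a, b') else 0 else 0) +
        (1 - s) * (q (a, b') * q (a', b)) := by
    rw [copyLaw_apply, delta_apply]
    grind
  simp [marginal, copyLaw_mk, Finset.sum_add_distrib, ← Finset.mul_sum, ← Finset.sum_mul]

end CopyLaw

section CopyCoupling

variable {P : Type} {q : P → ℝ} {l c : ℝ}

/-- The transition kernel that keeps `x` with probability `l` and otherwise replaces it by a fresh
sample from `q`. -/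
noncomputable def resample (q : P → ℝ) (l : ℝ) (x a : P) : ℝ :=
  l * δ x a + (1 - l) * q a

/-- The joint law of `((α, β), (ξ, η))` on which the orders of conditional independence of
`copyLaw q (l ^ 2)`, the law of `(α, β)`, and `copyLaw q (l ^ 2 - c)`, the law of `(ξ, η)`, are
compared: given `ξ`, and likewise given `η`, the variables `α` and `β` are independent and obtained
from it by `resample q l`. The terms with `c` cancel in both of these conditional laws, and they
lower the probability that `ξ` and `η` are copies from `l ^ 2` to `l ^ 2 - c`. -/
noncomputable def copyCoupling (q : P → ℝ) (l c : ℝ) : (P × P) × (P × P) → ℝ :=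
  fun ((a, b), (x, y)) =>
    (l ^ 2 - c) * (q x * δ x y * (δ x a * δ x b)) +
    q x * q y * (c * (δ x a * δ x b + δ y a * δ y b) +
      l * (1 - l) * (δ x a * δ y b + δ y a * δ x b) +
      q a * ((1 - l) ^ 2 * q b - c * δ a b))

lemma copyCoupling_swap (a b x y : P) :
    copyCoupling q l c ((a, b), (x, y)) = copyCoupling q l c ((a, b), (y, x)) := by
  rcases eq_or_ne x y with rfl | hxy
  · rfl
  · simp only [copyCoupling, Matrix.one_apply_ne hxy, Matrix.one_apply_ne hxy.symm]
    ring

lemma copyCoupling_nonneg (hq : ∀ x, 0 ≤ q x) (hl₀ : 0 ≤ l) (hl₁ : l ≤ 1) (hc₀ : 0 ≤ c)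
    (hcl : c ≤ l ^ 2) (hcq : ∀ x, c ≤ (1 - l) ^ 2 * q x) (ω : (P × P) × (P × P)) :
    0 ≤ copyCoupling q l c ω := by
  obtain ⟨⟨a, b⟩, x, y⟩ := ω
  have hfresh : 0 ≤ (1 - l) ^ 2 * q b - c * δ a b := by
    rcases eq_or_ne a b with rfl | hab
    · simpa using hcq a
    · simpa [Matrix.one_apply_ne hab] using mul_nonneg (sq_nonneg (1 - l)) (hq b)
  have := sub_nonneg.2 hl₁
  have := sub_nonneg.2 hcl
  have := hq a; have := hq x; have := hq y
  have := delta_nonneg x y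
  have := delta_nonneg x a; have := delta_nonneg x b
  have := delta_nonneg y a; have := delta_nonneg y b
  unfold copyCoupling
  positivity

variable [Fintype P]

lemma sum_mul_delta (f : P → ℝ) (a : P) : ∑ x, f x * δ x a = f a := by
  simp [delta_apply]

lemma sum_mul_delta_mul_delta (f : P → ℝ) (a b : P) :
    ∑ x, f x * (δ x a * δ x b) = f a * δ a b := by
  rw [← sum_mul_delta (fun x => f x * δ x b) a]
  exact Finset.sum_congr rfl fun x _ => by ring

lemma sum_copyCoupling_snd_snd (hq : ∑ x, q x = 1) (a b x : P) :
    ∑ y, copyCoupling q l c ((a, b), (x, y)) = q x * resample q l x a * resample q l x b := by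
  have sum_delta : ∑ y : P, δ x y = 1 := by simp [delta_apply]
  calc ∑ y, copyCoupling q l c ((a, b), (x, y))
    _ = ∑ y, ((l ^ 2 - c) * q x * (δ x a * δ x b) * δ x y +
        q x * c * (q y * (δ y a * δ y b)) +
        q x * l * (1 - l) * δ x a * (q y * δ y b) + q x * l * (1 - l) * δ x b * (q y * δ y a) +
        q x * (c * (δ x a * δ x b) + q a * ((1 - l) ^ 2 * q b - c * δ a b)) * q y) :=
      Finset.sum_congr rfl fun y _ => by rw [copyCoupling]; ring
    _ = q x * resample q l x a * resample q l x b := by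
      simp only [Finset.sum_add_distrib, ← Finset.mul_sum, sum_mul_delta_mul_delta, sum_mul_delta,
        sum_delta, hq, resample]
      ring

lemma sum_copyCoupling_fst (hq : ∑ x, q x = 1) (x y : P) :
    ∑ p, copyCoupling q l c (p, (x, y)) = copyLaw q (l ^ 2 - c) (x, y) := by
  have sum_delta (u v : P) : ∑ p : P × P, δ u p.1 * δ v p.2 = 1 := by
    simp [Fintype.sum_prod_type, delta_apply]
  have sum_q : ∑ p : P × P, q p.1 * q p.2 = 1 := by
    simp [Fintype.sum_prod_type, ← Finset.mul_sum, hq]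
  have sum_diag : ∑ p : P × P, q p.1 * δ p.1 p.2 = 1 := by
    simp [Fintype.sum_prod_type, delta_apply, hq]
  calc ∑ p, copyCoupling q l c (p, (x, y))
    _ = ∑ p : P × P, (((l ^ 2 - c) * q x * δ x y + q x * q y * c) * (δ x p.1 * δ x p.2) +
        q x * q y * c * (δ y p.1 * δ y p.2) +
        q x * q y * l * (1 - l) * (δ x p.1 * δ y p.2) +
        q x * q y * l * (1 - l) * (δ y p.1 * δ x p.2) +
        q x * q y * (1 - l) ^ 2 * (q p.1 * q p.2) - q x * q y * c * (q p.1 * δ p.1 p.2)) :=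
      Finset.sum_congr rfl fun p _ => by rw [copyCoupling]; ring
    _ = copyLaw q (l ^ 2 - c) (x, y) := by
      simp only [Finset.sum_add_distrib, Finset.sum_sub_distrib, ← Finset.mul_sum, sum_delta, sum_q,
        sum_diag, copyLaw_apply]
      ring

lemma sum_mul_resample_mul_resample (hq : ∑ x, q x = 1) (a b : P) :
    ∑ x, q x * resample q l x a * resample q l x b = copyLaw q (l ^ 2) (a, b) := by
  calc ∑ x, q x * resample q l x a * resample q l x b
    _ = ∑ x, (l ^ 2 * (q x * (δ x a * δ x b)) + l * (1 - l) * q b * (q x * δ x a) +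
        l * (1 - l) * q a * (q x * δ x b) + (1 - l) ^ 2 * q a * q b * q x) :=
      Finset.sum_congr rfl fun x _ => by simp only [resample]; ring
    _ = copyLaw q (l ^ 2) (a, b) := by
      simp only [Finset.sum_add_distrib, ← Finset.mul_sum, sum_mul_delta_mul_delta,
        sum_mul_delta, hq, copyLaw_apply]
      ring

lemma sum_copyCoupling_snd (hq : ∑ x, q x = 1) (a b : P) :
    ∑ p, copyCoupling q l c ((a, b), p) = copyLaw q (l ^ 2) (a, b) := by
  simp_rw [Fintype.sum_prod_type, sum_copyCoupling_snd_snd hq, sum_mul_resample_mul_resample hq]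

lemma isProb_copyCoupling (hq : IsProb q) (hl₀ : 0 ≤ l) (hl₁ : l ≤ 1) (hc₀ : 0 ≤ c)
    (hcl : c ≤ l ^ 2) (hcq : ∀ x, c ≤ (1 - l) ^ 2 * q x) : IsProb (copyCoupling q l c) := by
  refine ⟨copyCoupling_nonneg hq.1 hl₀ hl₁ hc₀ hcl hcq, ?_⟩
  simp_rw [Fintype.sum_prod_type (f := copyCoupling q l c), sum_copyCoupling_snd hq.2]
  exact (isProb_copyLaw hq (sq_nonneg l) (pow_le_one₀ hl₀ hl₁)).2

lemma pr_copyCoupling_snd_fst (hq : ∑ x, q x = 1) (a b x : P) :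
    pr (copyCoupling q l c) (fun ω => ω.1.1 = a ∧ ω.1.2 = b ∧ ω.2.1 = x) =
      q x * resample q l x a * resample q l x b := by
  rw [← sum_copyCoupling_snd_snd (c := c) hq, ← sum_pr_and _ (fun ω => ω.2.2)]
  refine Finset.sum_congr rfl fun y _ => ?_
  rw [← pr_fst_snd_eq (copyCoupling q l c)]
  exact pr_congr fun ω => by simp only [Prod.ext_iff]; tauto

lemma pr_copyCoupling_snd_snd (hq : ∑ x, q x = 1) (a b y : P) :
    pr (copyCoupling q l c) (fun ω => ω.1.1 = a ∧ ω.1.2 = b ∧ ω.2.2 = y) =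
      q y * resample q l y a * resample q l y b := by
  rw [← sum_copyCoupling_snd_snd (c := c) hq, ← sum_pr_and _ (fun ω => ω.2.1)]
  refine Finset.sum_congr rfl fun x _ => ?_
  rw [copyCoupling_swap, ← pr_fst_snd_eq (copyCoupling q l c)]
  exact pr_congr fun ω => by simp only [Prod.ext_iff]; tauto

lemma CondIndepOrder.copyLaw_succ {k : ℕ} (hq : IsProb q) (hl₀ : 0 ≤ l) (hl₁ : l ≤ 1)
    (hc₀ : 0 ≤ c) (hcl : c ≤ l ^ 2) (hcq : ∀ x, c ≤ (1 - l) ^ 2 * q x)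
    (h : CondIndepOrder (copyLaw q (l ^ 2 - c)) Prod.fst Prod.snd k) :
    CondIndepOrder (copyLaw q (l ^ 2)) Prod.fst Prod.snd (k + 1) := by
  have hprob := isProb_copyCoupling hq hl₀ hl₁ hc₀ hcl hcq
  have hξη : CondIndepOrder (copyCoupling q l c) (·.2.1) (·.2.2) k := h.congr_law fun x y => by
    simp_rw [pr_fst_snd_eq, ← Prod.ext_iff (y := (x, y)), pr_snd_eq, sum_copyCoupling_fst hq.2]
  have hαβ : CondIndepOrder (copyCoupling q l c) (·.1.1) (·.1.2) (k + 1) := hξη.succ hprob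
    (condMutualInfo_eq_zero_of_pr_eq_mul hprob.1 (pr_copyCoupling_snd_fst hq.2))
    (condMutualInfo_eq_zero_of_pr_eq_mul hprob.1 (pr_copyCoupling_snd_snd hq.2))
  exact hαβ.congr_law fun a b => by
    simp_rw [pr_fst_snd_eq, ← Prod.ext_iff (y := (a, b)), pr_fst_eq, sum_copyCoupling_snd hq.2]

lemma condIndepOrder_copyLaw_of_le {s s₁ ρ : ℝ} (hq : IsProb q) (hρ : 0 ≤ ρ) (hρq : ∀ x, ρ ≤ q x)
    (hs₁ : s₁ ≤ 1) (k : ℕ) (hs₀ : 0 ≤ s) (hss₁ : s ≤ s₁) (hsk : s ≤ k * ((1 - √s₁) ^ 2 * ρ)) :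
    CondIndepOrder (copyLaw q s) Prod.fst Prod.snd k := by
  induction k generalizing s with
  | zero =>
    obtain rfl : s = 0 := le_antisymm (by simpa using hsk) hs₀
    exact indep_copyLaw_zero hq.2
  | succ k ih =>
    set d := (1 - √s₁) ^ 2 * ρ with hd
    have hd₀ : 0 ≤ d := by positivity
    have hl : √s ≤ √s₁ := Real.sqrt_le_sqrt hss₁
    have hl₁ : √s₁ ≤ 1 := Real.sqrt_le_one.2 hs₁
    rw [← Real.sq_sqrt hs₀]
    refine .copyLaw_succ (c := min s d) hq (Real.sqrt_nonneg s) (hl.trans hl₁)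
      (le_min hs₀ hd₀) ?_ (fun x => ?_) ?_
    · rw [Real.sq_sqrt hs₀]
      exact min_le_left s d
    · calc min s d ≤ d := min_le_right s d
        _ ≤ (1 - √s) ^ 2 * q x := by
          have := sub_nonneg.2 hl₁
          rw [hd]
          gcongr
          exact hρq x
    · rw [Real.sq_sqrt hs₀]
      push_cast at hsk
      have hkd : 0 ≤ k * d := by positivity
      rcases min_cases s d with ⟨h, _⟩ | ⟨h, _⟩ <;> rw [h] <;> apply ih <;> linarith

lemma exists_condIndepOrder_copyLaw {s : ℝ} (hq : IsProb q) (hq_pos : ∀ x, 0 < q x) (hs₀ : 0 ≤ s)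
    (hs₁ : s < 1) : ∃ k, CondIndepOrder (copyLaw q s) Prod.fst Prod.snd k := by
  obtain ⟨ρ, hρ, hρq⟩ := Pi.exists_forall_pos_add_lt hq_pos
  have hd : 0 < (1 - √s) ^ 2 * ρ :=
    mul_pos (pow_pos (sub_pos.2 ((Real.sqrt_lt' one_pos).2 (by simpa using hs₁))) 2) hρ
  obtain ⟨k, hk⟩ := Archimedean.arch s hd
  exact ⟨k, condIndepOrder_copyLaw_of_le hq hρ.le (fun x => by simpa using (hρq x).le) hs₁.le k hs₀
    le_rfl (by simpa using hk)⟩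

end CopyCoupling

lemma exists_forall_one_sub_mul_lt {ι : Type*} [Finite ι] (f : ι → ℝ) {g : ι → ℝ}
    (hg : ∀ i, 0 < g i) : ∃ s ∈ Set.Ioo (0 : ℝ) 1, ∀ i, (1 - s) * f i < g i := by
  have eventually_lt : ∀ᶠ s in 𝓝[<] (1 : ℝ), ∀ i, (1 - s) * f i < g i := by
    refine Filter.eventually_all.2 fun i => nhdsWithin_le_nhds ?_
    have hcont : ContinuousAt (fun s : ℝ => (1 - s) * f i) 1 := by fun_prop
    exact hcont.eventually_lt continuousAt_const (by simpa using hg i)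
  obtain ⟨s, hlt, hs⟩ := (eventually_lt.and (Ioo_mem_nhdsLT zero_lt_one)).exists
  exact ⟨s, hs, hlt⟩

section Mixture

variable {A B : Type} [Fintype A] [Fintype B] {q : A × B → ℝ}

lemma exists_isProb_mixture_eq (hq : IsProb q) (hq_pos : ∀ p, 0 < q p) :
    ∃ s ∈ Set.Ioo (0 : ℝ) 1, ∃ q₀ : A × B → ℝ, IsProb q₀ ∧ (∀ p, 0 < q₀ p) ∧
      ∀ a b, s * q₀ (a, b) + (1 - s) * ((∑ b', q₀ (a, b')) * ∑ a', q₀ (a', b)) = q (a, b) := by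
  let row (a : A) : ℝ := ∑ b, q (a, b)
  let col (b : B) : ℝ := ∑ a, q (a, b)
  have sum_row : ∑ a, row a = 1 := by rw [← hq.2, Fintype.sum_prod_type]
  have sum_col : ∑ b, col b = 1 := by rw [← hq.2, Fintype.sum_prod_type_right]
  obtain ⟨s, hs, hlt⟩ := exists_forall_one_sub_mul_lt (fun p : A × B => row p.1 * col p.2) hq_pos
  have hs_ne : s ≠ 0 := hs.1.ne'
  let q₀ (p : A × B) : ℝ := (q p - (1 - s) * (row p.1 * col p.2)) / s
  have hq₀_pos (p : A × B) : 0 < q₀ p := div_pos (sub_pos.2 (hlt p)) hs.1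
  have row_q₀ (a : A) : ∑ b, q₀ (a, b) = row a := by
    simp only [q₀, ← Finset.sum_div, Finset.sum_sub_distrib, ← Finset.mul_sum, sum_col]
    change (row a - (1 - s) * (row a * 1)) / s = row a
    field_simp
    ring
  have col_q₀ (b : B) : ∑ a, q₀ (a, b) = col b := by
    simp only [q₀, ← Finset.sum_div, Finset.sum_sub_distrib, ← Finset.mul_sum, ← Finset.sum_mul,
      sum_row]
    change (col b - (1 - s) * (1 * col b)) / s = col b
    field_simp
    ring
  refine ⟨s, hs, q₀, ⟨fun p => (hq₀_pos p).le, ?_⟩, hq₀_pos, fun a b => ?_⟩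
  · simp_rw [Fintype.sum_prod_type, row_q₀, sum_row]
  · rw [row_q₀, col_q₀, mul_div_cancel₀ _ hs_ne, sub_add_cancel]

end Mixture

theorem isGoodMatrix_of_nonsingular_pos_general {m n : ℕ} (M : Matrix (Fin m) (Fin n) ℝ)
    (hjp : IsJointProbMatrix M) (hpos : ∀ i j, 0 < M i j) : IsGoodMatrix M := by
  have hM : IsProb fun p : Fin m × Fin n => M p.1 p.2 :=
    ⟨fun p => hjp.1 p.1 p.2, by simpa only [Fintype.sum_prod_type] using hjp.2⟩
  obtain ⟨s, ⟨hs₀, hs₁⟩, q, hq, hq_pos, hqM⟩ := exists_isProb_mixture_eq hM fun p => hpos p.1 p.2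
  obtain ⟨k, hk⟩ := exists_condIndepOrder_copyLaw hq hq_pos hs₀.le hs₁
  have hprob := isProb_copyLaw hq hs₀.le hs₁.le
  refine ⟨_, _, copyLaw q s, Prod.fst ∘ Prod.fst, Prod.snd ∘ Prod.snd, k + 1, hprob,
    fun i j => ?_, hk.comp hprob Prod.fst Prod.snd⟩
  exact ((pr_copyLaw_fst_fst_snd_snd q s i j).trans (hqM i j)).symm

/-- Every nonsingular `n × n` joint probability matrix with strictly
positive entries is a good matrix. -/
theorem isGoodMatrix_of_nonsingular_pos {n : ℕ} (M : Matrix (Fin n) (Fin n) ℝ)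
    (hjp : IsJointProbMatrix M) (hdet : M.det ≠ 0) (hpos : ∀ i j, 0 < M i j) :
    IsGoodMatrix M :=
  isGoodMatrix_of_nonsingular_pos_general M hjp hpos
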